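/- There exists μ∈𝒫(V) such that the function (0,∞)∋δ ↦ I_δ(μ) is not differentiable at δ=1. -/

import Mathlib

open scoped BigOperators Classical ENNReal
open Filter Topology

noncomputable section
namespace ORRW

/-- Probability measures on a finite type `A`, topologized as a subset of `ℝ^A`. -/
abbrev ProbMeas (A : Type) [Fintype A] : Type :=
  {p : A → ℝ // (∀ a, 0 ≤ p a) ∧ ∑ a, p a = 1}

/-- Relative entropy `R(γ‖ρ)` between two finitely supported "rows", valued in `EReal`,
with `+∞` when absolute continuity fails. -/
def relEnt {A : Type} [Fintype A] (γ ρ : A → ℝ) : EReal :=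
  if ∀ a, ρ a = 0 → γ a = 0 then ((∑ a, γ a * Real.log (γ a / ρ a) : ℝ) : EReal)
  else (⊤ : EReal)

/-- `∫ R(q‖p) dν = Σ_a ν(a) · R(q(a,·)‖p(a,·))`. -/
def relEntInt {A : Type} [Fintype A] (ν : A → ℝ) (q p : A → A → ℝ) : EReal :=
  ∑ a, (ν a : EReal) * relEnt (q a) (p a)

/-- `ν` is an invariant measure of the kernel `q`. -/
def Invariant {A : Type} [Fintype A] (ν : A → ℝ) (q : A → A → ℝ) : Prop :=
  ∀ y, ∑ x, ν x * q x y = ν y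

/-- Extended-real logarithm: `⊥` at nonpositive arguments. -/
def elog (x : ℝ) : EReal := if x ≤ 0 then (⊥ : EReal) else ((Real.log x : ℝ) : EReal)

/-- Empirical measure of a finite trajectory `f : Fin (n+1) → A`. -/
def empMeas {A : Type} [Fintype A] [DecidableEq A] (n : ℕ) (f : Fin (n + 1) → A) :
    ProbMeas A :=
  ⟨fun a => ((Finset.univ.filter (fun i => f i = a)).card : ℝ) / (n + 1),
    fun a => by positivity, by
      have key : ∑ a : A, ((Finset.univ.filter (fun i => f i = a)).card) = n + 1 := by
        have h := Finset.card_eq_sum_card_fiberwise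
          (s := (Finset.univ : Finset (Fin (n + 1)))) (t := (Finset.univ : Finset A))
          (f := f) (fun i _ => Finset.mem_univ (f i))
        simpa using h.symm
      have key' : ∑ a : A, (((Finset.univ.filter (fun i => f i = a)).card : ℝ)) = (n : ℝ) + 1 := by
        have h2 := congrArg (fun m : ℕ => (m : ℝ)) key
        push_cast at h2
        simpa using h2
      rw [← Finset.sum_div, key', div_self (by positivity)]⟩

section Graph

variable {V : Type} [Fintype V] [DecidableEq V]

/-- Weight of an edge given the set `F` of already traversed edges. -/
def gw (δ : ℝ) (F : Finset (Sym2 V)) (e : Sym2 V) : ℝ := if e ∈ F then δ else 1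

/-- The transition kernel `p̂_F` on `V`. -/
def phat (G : SimpleGraph V) [DecidableRel G.Adj] (δ : ℝ) (F : Finset (Sym2 V))
    (x y : V) : ℝ :=
  if G.Adj x y then gw δ F s(x, y) / ∑ z ∈ G.neighborFinset x, gw δ F s(x, z) else 0

/-- Two edges are adjacent iff they share a vertex. -/
def edgeAdj (e e' : Sym2 V) : Prop := ∃ v, v ∈ e ∧ v ∈ e'

/-- `x` is a vertex of the edge set `F`. -/
def memVerts (F : Finset (Sym2 V)) (x : V) : Prop := ∃ e ∈ F, x ∈ e

/-- `𝒯_G`: stochastic matrices on `V` adapted to `G`. -/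
def TG (G : SimpleGraph V) : Set (V → V → ℝ) :=
  {q | (∀ x y, 0 ≤ q x y) ∧ (∀ x, ∑ y, q x y = 1) ∧ ∀ x y, q x y ≠ 0 → G.Adj x y}

/-- `𝒯(F)`: stochastic kernels from the vertex set of `F` to `V`, supported on `F`. -/
def TE (F : Finset (Sym2 V)) : Set (V → V → ℝ) :=
  {q | (∀ x y, 0 ≤ q x y) ∧ (∀ x, memVerts F x → ∑ y, q x y = 1) ∧
    ∀ x y, q x y ≠ 0 → s(x, y) ∈ F}

/-- `ℰ`: admissible increasing sequences of traversed edge sets. -/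
def seqE (G : SimpleGraph V) [DecidableRel G.Adj] (v₁ : V) :
    Set (Fin G.edgeFinset.card → Finset (Sym2 V)) :=
  {Es | (∀ k, Es k ⊆ G.edgeFinset) ∧ (∀ k, (Es k).card = (k : ℕ) + 1) ∧
    (∀ k l : Fin G.edgeFinset.card, (k : ℕ) + 1 = (l : ℕ) → Es k ⊂ Es l) ∧
    (∀ k : Fin G.edgeFinset.card, (k : ℕ) = 0 → ∃ e ∈ Es k, v₁ ∈ e) ∧
    (∀ k l : Fin G.edgeFinset.card, (k : ℕ) + 1 = (l : ℕ) →
      ∀ e ∈ Es l \ Es k, ∃ e' ∈ Es k, edgeAdj e e')}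

/-- The rate function `I_δ`. -/
def Ifun (G : SimpleGraph V) [DecidableRel G.Adj] (v₁ : V) (δ : ℝ) (ν : ProbMeas V) : EReal :=
  sInf { c : EReal |
    ∃ (νs : Fin G.edgeFinset.card → ProbMeas V) (r : Fin G.edgeFinset.card → ℝ)
      (Es : Fin G.edgeFinset.card → Finset (Sym2 V))
      (qs : Fin G.edgeFinset.card → V → V → ℝ),
      Es ∈ seqE G v₁ ∧ (∀ k, 0 ≤ r k) ∧ (∑ k, r k = 1) ∧
      (∀ k x, (νs k).1 x ≠ 0 → memVerts (Es k) x) ∧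
      (∀ x, ∑ k, r k * (νs k).1 x = ν.1 x) ∧
      (∀ k, qs k ∈ TE (Es k)) ∧ (∀ k, Invariant (νs k).1 (qs k)) ∧
      c = ∑ k, ((r k : ℝ) : EReal) * relEntInt (νs k).1 (qs k) (phat G δ (Es k)) }

/-- Edges traversed along a path, given as a list of consecutively visited vertices. -/
def pathEdges : List V → Finset (Sym2 V)
  | [] => ∅
  | [_] => ∅
  | x :: y :: t => insert s(x, y) (pathEdges (y :: t))

/-- Product of one-step ORRW transition probabilities along a trajectory,
the trajectory being listed in reverse chronological order. -/
def stepsProb (G : SimpleGraph V) [DecidableRel G.Adj] (δ : ℝ) : List V → ℝ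
  | [] => 1
  | [_] => 1
  | y :: x :: t => phat G δ (pathEdges (x :: t).reverse) x y * stepsProb G δ (x :: t)

/-- The law of `(X_0, …, X_n)` for the `δ`-ORRW started at `v₁`. -/
def trajProb (G : SimpleGraph V) [DecidableRel G.Adj] (δ : ℝ) (v₁ : V) (n : ℕ)
    (f : Fin (n + 1) → V) : ℝ :=
  if f 0 = v₁ then stepsProb G δ (List.ofFn f).reverse else 0

/-- `P_{v₁}(L_{n+1} ∈ C)`: the probability that the empirical measure of the first
`n+1` positions of the `δ`-ORRW lies in `C`. -/
def probEmp (G : SimpleGraph V) [DecidableRel G.Adj] (δ : ℝ) (v₁ : V) (n : ℕ)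
    (C : Set (ProbMeas V)) : ℝ :=
  ∑ f : Fin (n + 1) → V, if empMeas n f ∈ C then trajProb G δ v₁ n f else 0

/-- The family `𝒮` of edge sets of connected subgraphs having an edge at `v₁`. -/
def scrS (G : SimpleGraph V) [DecidableRel G.Adj] (v₁ : V) : Set (Finset (Sym2 V)) :=
  {F | F ⊆ G.edgeFinset ∧ (∃ e ∈ F, v₁ ∈ e) ∧
    ∀ x y : V, memVerts F x → memVerts F y →
      (SimpleGraph.fromEdgeSet (↑F : Set (Sym2 V))).Reachable x y}

/-- `𝒮₀` is a decreasing subset of `𝒮`. -/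
def DecreasingIn (G : SimpleGraph V) [DecidableRel G.Adj] (v₁ : V)
    (S0 : Set (Finset (Sym2 V))) : Prop :=
  ∀ F₁ F₂, F₁ ∈ scrS G v₁ → F₂ ∈ scrS G v₁ → F₁ ⊆ F₂ → F₂ ∈ S0 → F₁ ∈ S0

/-- `P_{v₁}(T_{𝒮₀} > n)`. -/
def probTgt (G : SimpleGraph V) [DecidableRel G.Adj] (δ : ℝ) (v₁ : V)
    (S0 : Set (Finset (Sym2 V))) (n : ℕ) : ℝ :=
  ∑ f : Fin (n + 1) → V,
    if ∀ k, 1 ≤ k → k ≤ n → pathEdges ((List.ofFn f).take (k + 1)) ∈ S0 then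
      trajProb G δ v₁ n f
    else 0

/-- `P_{v₁}(C_E > n)` for the edge cover time `C_E`. -/
def probCgt (G : SimpleGraph V) [DecidableRel G.Adj] (δ : ℝ) (v₁ : V) (n : ℕ) : ℝ :=
  ∑ f : Fin (n + 1) → V,
    if ¬ G.edgeFinset ⊆ pathEdges (List.ofFn f) then trajProb G δ v₁ n f else 0

/-- `E_{v₁}[exp (α T_{𝒮₀})]`, valued in `ℝ≥0∞`; the stopping time takes values in
`{1, 2, …} ∪ {∞}`. -/
def expT (G : SimpleGraph V) [DecidableRel G.Adj] (δ : ℝ) (v₁ : V)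
    (S0 : Set (Finset (Sym2 V))) (α : ℝ) : ℝ≥0∞ :=
  (∑' n : ℕ, ENNReal.ofReal
      (Real.exp (α * (n + 1)) * (probTgt G δ v₁ S0 n - probTgt G δ v₁ S0 (n + 1)))) +
    (if 0 < α then (⊤ : ℝ≥0∞) else if α = 0 then 1 else 0) *
      ENNReal.ofReal (⨅ n : ℕ, probTgt G δ v₁ S0 n)

/-- `E_{v₁}[exp (α C_E)]`, valued in `ℝ≥0∞`. -/
def expC (G : SimpleGraph V) [DecidableRel G.Adj] (δ : ℝ) (v₁ : V) (α : ℝ) : ℝ≥0∞ :=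
  (∑' n : ℕ, ENNReal.ofReal
      (Real.exp (α * (n + 1)) * (probCgt G δ v₁ n - probCgt G δ v₁ (n + 1)))) +
    (if 0 < α then (⊤ : ℝ≥0∞) else if α = 0 then 1 else 0) *
      ENNReal.ofReal (⨅ n : ℕ, probCgt G δ v₁ n)

/-- The critical exponent `α_c(δ)` attached to a family `𝒮₀` of edge sets. -/
def alphaC (G : SimpleGraph V) [DecidableRel G.Adj] (δ : ℝ)
    (S0 : Set (Finset (Sym2 V))) : EReal :=
  sInf { c : EReal | ∃ (ν : ProbMeas V) (F : Finset (Sym2 V)) (q : V → V → ℝ),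
    F ∈ S0 ∧ q ∈ TE F ∧ (∀ x, ν.1 x ≠ 0 → memVerts F x) ∧ Invariant ν.1 q ∧
    c = relEntInt ν.1 q (phat G δ F) }

/-- `α_c^1(δ)`: the critical exponent for the cover time. -/
def alphaC1 (G : SimpleGraph V) [DecidableRel G.Adj] (v₁ : V) (δ : ℝ) : EReal :=
  alphaC G δ (scrS G v₁ \ {G.edgeFinset})

end Graph

section Lifted

variable {V : Type} [Fintype V] [LinearOrder V]

/-- Smaller endpoint of an unordered pair. -/
def sym2lo (e : Sym2 V) : V := Sym2.lift ⟨fun a b => min a b, fun a b => min_comm a b⟩ e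

/-- Larger endpoint of an unordered pair. -/
def sym2hi (e : Sym2 V) : V := Sym2.lift ⟨fun a b => max a b, fun a b => max_comm a b⟩ e

/-- `V_S = E × {-1, 1}`: vertex set of the lifted directed graph `S`
(`true` plays the role of `+1`). -/
abbrev VSet (G : SimpleGraph V) [DecidableRel G.Adj] : Type :=
  {e : Sym2 V // e ∈ G.edgeFinset} × Bool

/-- Tail `z⁻` of an oriented edge. -/
def zm (G : SimpleGraph V) [DecidableRel G.Adj] (z : VSet G) : V :=
  if z.2 then sym2lo z.1.1 else sym2hi z.1.1

/-- Head `z⁺` of an oriented edge. -/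
def zp (G : SimpleGraph V) [DecidableRel G.Adj] (z : VSet G) : V :=
  if z.2 then sym2hi z.1.1 else sym2lo z.1.1

/-- The kernel `p_F` on the lifted directed graph `S`. -/
def pS (G : SimpleGraph V) [DecidableRel G.Adj] (δ : ℝ) (F : Finset (Sym2 V))
    (z₁ z₂ : VSet G) : ℝ :=
  if zp G z₁ = zm G z₂ then
    gw δ F z₂.1.1 / ∑ w : VSet G, (if zp G z₁ = zm G w then gw δ F w.1.1 else 0)
  else 0

/-- `𝒯_S`: stochastic matrices on `V_S` moving along orientations. -/
def TS (G : SimpleGraph V) [DecidableRel G.Adj] : Set (VSet G → VSet G → ℝ) :=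
  {q | (∀ z w, 0 ≤ q z w) ∧ (∀ z, ∑ w, q z w = 1) ∧ ∀ z w, q z w ≠ 0 → zp G z = zm G w}

/-- `𝒞(𝒮₀)`: probability measures on `V_S` whose first marginal is supported in
some member of `𝒮₀`. -/
def CC (G : SimpleGraph V) [DecidableRel G.Adj] (S0 : Set (Finset (Sym2 V))) :
    Set (ProbMeas (VSet G)) :=
  {μ | ∃ F ∈ S0, ∀ z : VSet G, μ.1 z ≠ 0 → z.1.1 ∈ F}

/-- `Λ_{δ,𝒮₀}`. -/
def Lam (G : SimpleGraph V) [DecidableRel G.Adj] (v₁ : V) (δ : ℝ)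
    (S0 : Set (Finset (Sym2 V))) (μ : ProbMeas (VSet G)) : EReal :=
  sInf { c : EReal |
    ∃ (μs : Fin G.edgeFinset.card → ProbMeas (VSet G)) (r : Fin G.edgeFinset.card → ℝ)
      (Es : Fin G.edgeFinset.card → Finset (Sym2 V))
      (qs : Fin G.edgeFinset.card → VSet G → VSet G → ℝ),
      Es ∈ seqE G v₁ ∧ (∀ k, 0 ≤ r k) ∧ (∀ k, Es k ∉ S0 → r k = 0) ∧ (∑ k, r k = 1) ∧
      (∀ k z, (μs k).1 z ≠ 0 → z.1.1 ∈ Es k) ∧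
      (∀ z, ∑ k, r k * (μs k).1 z = μ.1 z) ∧
      (∀ k, qs k ∈ TS G) ∧ (∀ k, Invariant (μs k).1 (qs k)) ∧
      c = ∑ k, ((r k : ℝ) : EReal) * relEntInt (μs k).1 (qs k) (pS G δ (Es k)) }

/-- `Λ^z_{δ,𝒮₀}`. -/
def LamZ (G : SimpleGraph V) [DecidableRel G.Adj] (v₁ : V) (δ : ℝ)
    (S0 : Set (Finset (Sym2 V))) (z : VSet G) (μ : ProbMeas (VSet G)) : EReal :=
  sInf { c : EReal |
    ∃ (μs : Fin G.edgeFinset.card → ProbMeas (VSet G)) (r : Fin G.edgeFinset.card → ℝ)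
      (Es : Fin G.edgeFinset.card → Finset (Sym2 V))
      (qs : Fin G.edgeFinset.card → VSet G → VSet G → ℝ),
      Es ∈ seqE G v₁ ∧ (∀ k : Fin G.edgeFinset.card, (k : ℕ) = 0 → Es k = {z.1.1}) ∧
      (∀ k, 0 ≤ r k) ∧ (∀ k, Es k ∉ S0 → r k = 0) ∧ (∑ k, r k = 1) ∧
      (∀ k w, (μs k).1 w ≠ 0 → w.1.1 ∈ Es k) ∧
      (∀ w, ∑ k, r k * (μs k).1 w = μ.1 w) ∧
      (∀ k, qs k ∈ TS G) ∧ (∀ k, Invariant (μs k).1 (qs k)) ∧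
      c = ∑ k, ((r k : ℝ) : EReal) * relEntInt (μs k).1 (qs k) (pS G δ (Es k)) }

/-- `Λ₁`: the Donsker–Varadhan functional for the simple random walk on `S`
(whose kernel is `pS` with `δ = 1`). -/
def Lam1 (G : SimpleGraph V) [DecidableRel G.Adj] (μ : ProbMeas (VSet G)) : EReal :=
  sInf { c : EReal | ∃ q ∈ TS G, Invariant μ.1 q ∧ c = relEntInt μ.1 q (pS G 1 ∅) }

/-- Boundary `∂F` of an edge set: edges of `F` adjacent to some edge outside `F`. -/
def bdry (G : SimpleGraph V) [DecidableRel G.Adj] (F : Finset (Sym2 V)) : Finset (Sym2 V) :=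
  F.filter fun e => ∃ e' ∈ G.edgeFinset \ F, edgeAdj e e'

/-- Out-degree `d(z)` of `z` in `S`. -/
def outDeg (G : SimpleGraph V) [DecidableRel G.Adj] (z : VSet G) : ℕ :=
  (Finset.univ.filter (fun w : VSet G => zp G z = zm G w)).card

/-- Number `k(z)` of out-neighbours of `z` lying in `F × {-1, 1}`. -/
def outDegIn (G : SimpleGraph V) [DecidableRel G.Adj] (F : Finset (Sym2 V))
    (z : VSet G) : ℕ :=
  (Finset.univ.filter (fun w : VSet G => zp G z = zm G w ∧ w.1.1 ∈ F)).card

/-- The law of `(Z_0, …, Z_n)` for the lifted `δ`-ORRW conditioned on `Z_0 = z`. -/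
def liftTraj (G : SimpleGraph V) [DecidableRel G.Adj] (δ : ℝ) (z : VSet G) (n : ℕ)
    (g : Fin (n + 1) → VSet G) : ℝ :=
  if g 0 = z then
    ∏ i : Fin n,
      pS G δ ((Finset.Iic i.castSucc).image (fun j => (g j).1.1))
        (g i.castSucc) (g i.succ)
  else 0

/-- The restricted logarithmic Laplace functional `W^{n+1}_{𝒮₀}(z)`. -/
def Wres (G : SimpleGraph V) [DecidableRel G.Adj] (δ : ℝ) (z : VSet G)
    (S0 : Set (Finset (Sym2 V))) (h : ProbMeas (VSet G) → ℝ) (n : ℕ) : EReal :=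
  if 0 < ∑ g : Fin (n + 1) → VSet G,
      (if empMeas n g ∈ CC G S0 then liftTraj G δ z n g else 0) then
    ((-((((n : ℝ) + 1))⁻¹ * Real.log (∑ g : Fin (n + 1) → VSet G,
      if empMeas n g ∈ CC G S0 then
        Real.exp (-((n : ℝ) + 1) * h (empMeas n g)) * liftTraj G δ z n g
      else 0)) : ℝ) : EReal)
  else (⊤ : EReal)

end Lifted

/-!
Fix a neighbour `u` of `v₁` and let `μ` be uniform on `{v₁, u}`. Since `μ` only charges these two
vertices, every component of an admissible mixture is again `μ`, with a kernel that jumps back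
and forth along the edge `e = {v₁, u}`. Hence `I_δ(μ)` is the minimum, over the sets `F ∋ e` of an
admissible sequence, of `-(log p̂_F(v₁, u) + log p̂_F(u, v₁)) / 2`. For `δ ≤ 1` reinforced edges are
lighter, so `F = E` is optimal, `p̂_E(x, y) = 1 / deg x`, and `I_δ(μ)` is constant. For `δ ≥ 1`
they are heavier, so `F = {e}` is optimal and `p̂_{e}(x, y) = δ / (δ + deg x - 1)`. The
one-sided derivatives at `1` are therefore `0` and `-((1 - 1 / deg v₁) + (1 - 1 / deg u)) / 2`,
and the latter is negative because, with at least three vertices, `v₁` or `u` has a second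
neighbour.
-/

section Calculus

theorem not_differentiableAt_of_hasDerivWithinAt_Iic_Ici {E : Type*} [NormedAddCommGroup E]
    [NormedSpace ℝ E] {f : ℝ → E} {a b : E} {x : ℝ} (hleft : HasDerivWithinAt f a (Set.Iic x) x)
    (hright : HasDerivWithinAt f b (Set.Ici x) x) (hab : a ≠ b) : ¬ DifferentiableAt ℝ f x := by
  intro hf
  have hderiv := hf.hasDerivAt
  have deriv_eq_left : deriv f x = a :=
    (uniqueDiffWithinAt_Iic x).eq_deriv _ hderiv.hasDerivWithinAt hleft
  have deriv_eq_right : deriv f x = b :=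
    (uniqueDiffWithinAt_Ici x).eq_deriv _ hderiv.hasDerivWithinAt hright
  exact hab (deriv_eq_left.symm.trans deriv_eq_right)

theorem hasDerivAt_log_div_add_sub_one {d : ℝ} (hd : 0 < d) :
    HasDerivAt (fun δ : ℝ => Real.log (δ / (δ + (d - 1)))) (1 - d⁻¹) 1 := by
  have hquot : HasDerivAt (fun δ : ℝ => δ / (δ + (d - 1))) _ 1 :=
    (hasDerivAt_id' (1 : ℝ)).fun_div ((hasDerivAt_id' (1 : ℝ)).add_const (d - 1))
      (by simpa using hd.ne')
  convert hquot.log (by simpa using hd.ne') using 1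
  simp only [add_sub_cancel]
  field_simp

end Calculus

theorem coe_real_sum {ι : Type*} (s : Finset ι) (f : ι → ℝ) :
    ((∑ i ∈ s, f i : ℝ) : EReal) = ∑ i ∈ s, (f i : EReal) :=
  map_sum (⟨⟨Real.toEReal, EReal.coe_zero⟩, EReal.coe_add⟩ : ℝ →+ EReal) f s

theorem eq_zero_of_mixture_eq_zero {A : Type} [Fintype A] {ι : Type*} [Fintype ι]
    {νs : ι → ProbMeas A} {r : ι → ℝ} (hr : ∀ k, 0 ≤ r k) {x : A}
    (hmix : ∑ k, r k * (νs k).1 x = 0) {k : ι} (hk : 0 < r k) :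
    (νs k).1 x = 0 := by
  have hterm := (Finset.sum_eq_zero_iff_of_nonneg
    fun i _ => mul_nonneg (hr i) ((νs i).2.1 x)).1 hmix k (Finset.mem_univ k)
  exact (mul_eq_zero.1 hterm).resolve_left hk.ne'

section TwoPointMeasure

variable {A : Type} [Fintype A] [DecidableEq A]

/-- The uniform measure on the endpoints of an edge `{v, u}`, as the mean of two Dirac masses;
it is `δ_v` if `v = u`. -/
def edgeMeas (v u : A) : ProbMeas A :=
  ⟨fun x => ((Pi.single v 1 : A → ℝ) x + (Pi.single u 1 : A → ℝ) x) / 2,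
    fun x => by simp only [Pi.single_apply]; positivity,
    by rw [← Finset.sum_div, Finset.sum_add_distrib]; simp⟩

theorem edgeMeas_apply_left {v u : A} (hvu : v ≠ u) : (edgeMeas v u).1 v = 1 / 2 := by
  simp [edgeMeas, hvu]

theorem edgeMeas_apply_right {v u : A} (hvu : v ≠ u) : (edgeMeas v u).1 u = 1 / 2 := by
  simp [edgeMeas, hvu.symm]

theorem edgeMeas_apply_of_ne {v u x : A} (hxv : x ≠ v) (hxu : x ≠ u) :
    (edgeMeas v u).1 x = 0 := by
  simp [edgeMeas, hxv, hxu]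

theorem eq_or_eq_of_edgeMeas_ne_zero {v u x : A} (hx : (edgeMeas v u).1 x ≠ 0) :
    x = v ∨ x = u := by
  by_contra! hne
  exact hx (edgeMeas_apply_of_ne hne.1 hne.2)

theorem sum_edgeMeas_mul (v u : A) (f : A → ℝ) :
    ∑ x, (edgeMeas v u).1 x * f x = (f v + f u) / 2 := by
  simp only [edgeMeas, div_mul_eq_mul_div, add_mul, ← Finset.sum_div, Finset.sum_add_distrib]
  simp [Pi.single_apply]

theorem invariant_edgeMeas {v u : A} {q : A → A → ℝ} (hv : q v = Pi.single u 1)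
    (hu : q u = Pi.single v 1) : Invariant (edgeMeas v u).1 q := by
  intro y
  rw [sum_edgeMeas_mul v u (fun x => q x y), hv, hu, add_comm]
  rfl

-- Without holding, each of the two vertices receives its mass from the other one, so neither
-- can be heavier and no mass may leave the pair.
theorem eq_edgeMeas_of_invariant {v u : A} (hvu : v ≠ u) {ν : ProbMeas A}
    (hν : ∀ x, x ≠ v → x ≠ u → ν.1 x = 0) {q : A → A → ℝ} (hinv : Invariant ν.1 q)
    (hself : ∀ x, q x x = 0) (hle : ∀ x y, q x y ≤ 1) :
    ν = edgeMeas v u ∧ q v u = 1 ∧ q u v = 1 := by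
  have hsum : ν.1 v + ν.1 u = 1 :=
    (Fintype.sum_eq_add v u hvu fun x hx => hν x hx.1 hx.2).symm.trans ν.2.2
  have hbalance (y : A) : ν.1 v * q v y + ν.1 u * q u y = ν.1 y := by
    rw [← hinv y, Fintype.sum_eq_add v u hvu fun x hx => by rw [hν x hx.1 hx.2, zero_mul]]
  have hflow_v : ν.1 u * q u v = ν.1 v := by simpa [hself] using hbalance v
  have hflow_u : ν.1 v * q v u = ν.1 u := by simpa [hself] using hbalance u
  have hvle : ν.1 v ≤ ν.1 u := hflow_v ▸ mul_le_of_le_one_right (ν.2.1 u) (hle u v)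
  have hule : ν.1 u ≤ ν.1 v := hflow_u ▸ mul_le_of_le_one_right (ν.2.1 v) (hle v u)
  have hνv : ν.1 v = 1 / 2 := by linarith
  have hνu : ν.1 u = 1 / 2 := by linarith
  rw [hνv, hνu] at hflow_v hflow_u
  refine ⟨Subtype.ext (funext fun x => ?_), by linarith, by linarith⟩
  rcases eq_or_ne x v with rfl | hxv
  · rw [hνv, edgeMeas_apply_left hvu]
  rcases eq_or_ne x u with rfl | hxu
  · rw [hνu, edgeMeas_apply_right hvu]
  · rw [hν x hxv hxu, edgeMeas_apply_of_ne hxv hxu]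

theorem relEnt_single {a : A} {ρ : A → ℝ} (ha : ρ a ≠ 0) :
    relEnt (Pi.single a 1) ρ = ((-Real.log (ρ a) : ℝ) : EReal) := by
  have hac : ∀ b, ρ b = 0 → (Pi.single a 1 : A → ℝ) b = 0 := by
    rintro b hb
    exact Pi.single_eq_of_ne (by rintro rfl; exact ha hb) _
  rw [relEnt, if_pos hac, Finset.sum_eq_single a]
  · simp
  · intro b _ hb
    simp [hb]
  · simp

theorem relEntInt_edgeMeas {v u : A} (hvu : v ≠ u) (q p : A → A → ℝ) :
    relEntInt (edgeMeas v u).1 q p =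
      ((1 / 2 : ℝ) : EReal) * relEnt (q v) (p v) + ((1 / 2 : ℝ) : EReal) * relEnt (q u) (p u) := by
  rw [relEntInt, Fintype.sum_eq_add v u hvu, edgeMeas_apply_left hvu, edgeMeas_apply_right hvu]
  intro x hx
  rw [edgeMeas_apply_of_ne hx.1 hx.2, EReal.coe_zero, zero_mul]

end TwoPointMeasure

theorem one_lt_degree_or_one_lt_degree {V : Type*} [Fintype V] {G : SimpleGraph V}
    [DecidableRel G.Adj] (hG : G.Connected) (hV : 3 ≤ Fintype.card V) {v u : V}
    (hvu : G.Adj v u) : 1 < G.degree v ∨ 1 < G.degree u := by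
  have hcard : ({v, u} : Finset V).card < (Finset.univ : Finset V).card :=
    Finset.card_le_two.trans_lt hV
  obtain ⟨w, -, hw⟩ := Finset.exists_mem_notMem_of_card_lt_card hcard
  obtain ⟨walk⟩ := hG.preconnected v w
  obtain ⟨d, -, hfst, hsnd⟩ :=
    walk.exists_boundary_dart {v, u} (Set.mem_insert v {u}) (by simpa using hw)
  have one_lt_degree_fst {z : V} (hz : G.Adj d.fst z) (hzd : z ≠ d.snd) :
      1 < G.degree d.fst :=
    Finset.one_lt_card.2 ⟨z, by simpa using hz, d.snd, by simp, hzd⟩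
  rcases hfst with hv | hu
  · refine Or.inl (hv ▸ one_lt_degree_fst (hv ▸ hvu) ?_)
    rintro rfl
    simp at hsnd
  · rw [Set.mem_singleton_iff] at hu
    refine Or.inr (hu ▸ one_lt_degree_fst (hu ▸ hvu.symm) ?_)
    rintro rfl
    simp at hsnd

section KernelEntries

variable {V : Type} [Fintype V] {F : Finset (Sym2 V)} {q : V → V → ℝ} {x y : V}

theorem TE_apply_self {G : SimpleGraph V} [DecidableRel G.Adj] (hF : F ⊆ G.edgeFinset)
    (hq : q ∈ TE F) (x : V) : q x x = 0 := by
  by_contra hx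
  simpa using hF (hq.2.2 x x hx)

theorem sum_eq_one_of_TE_apply_ne_zero (hq : q ∈ TE F) (hxy : q x y ≠ 0) :
    ∑ z, q x z = 1 :=
  hq.2.1 x ⟨s(x, y), hq.2.2 x y hxy, Sym2.mem_mk_left x y⟩

theorem TE_apply_le_one (hq : q ∈ TE F) (x y : V) : q x y ≤ 1 := by
  rcases eq_or_ne (q x y) 0 with hxy | hxy
  · exact hxy.trans_le zero_le_one
  · rw [← sum_eq_one_of_TE_apply_ne_zero hq hxy]
    exact Finset.single_le_sum (fun z _ => hq.1 x z) (Finset.mem_univ y)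

end KernelEntries

section Weight

variable {V : Type} [DecidableEq V] {δ : ℝ} {F₁ F₂ : Finset (Sym2 V)}

theorem gw_pos (hδ : 0 < δ) (F : Finset (Sym2 V)) (e : Sym2 V) : 0 < gw δ F e := by
  rw [gw]
  split_ifs <;> positivity

theorem gw_anti_of_le_one (hδ : δ ≤ 1) (hF : F₁ ⊆ F₂) (e : Sym2 V) : gw δ F₂ e ≤ gw δ F₁ e := by
  rw [gw, gw]
  split_ifs with h₂ h₁ h₁
  exacts [le_rfl, hδ, absurd (hF h₁) h₂, le_rfl]

theorem gw_mono_of_one_le (hδ : 1 ≤ δ) (hF : F₁ ⊆ F₂) (e : Sym2 V) : gw δ F₁ e ≤ gw δ F₂ e := by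
  rw [gw, gw]
  split_ifs with h₁ h₂ h₂
  exacts [le_rfl, absurd (hF h₁) h₂, hδ, le_rfl]

end Weight

section Graph

variable {V : Type} [Fintype V] [DecidableEq V] {G : SimpleGraph V} [DecidableRel G.Adj]
  {δ : ℝ} {F F₁ F₂ : Finset (Sym2 V)} {v u v₁ x y : V}

section Kernel

theorem sum_neighborFinset_gw_pos (hδ : 0 < δ) (F : Finset (Sym2 V)) (hxy : G.Adj x y) :
    0 < ∑ z ∈ G.neighborFinset x, gw δ F s(x, z) :=
  Finset.sum_pos (fun z _ => gw_pos hδ F s(x, z)) ⟨y, by simpa using hxy⟩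

theorem phat_of_adj_of_mem (hxy : G.Adj x y) (he : s(x, y) ∈ F) :
    phat G δ F x y = δ / ∑ z ∈ G.neighborFinset x, gw δ F s(x, z) := by
  rw [phat, if_pos hxy, gw, if_pos he]

theorem phat_pos (hδ : 0 < δ) (F : Finset (Sym2 V)) (hxy : G.Adj x y) : 0 < phat G δ F x y := by
  rw [phat, if_pos hxy]
  exact div_pos (gw_pos hδ F s(x, y)) (sum_neighborFinset_gw_pos hδ F hxy)

theorem phat_mono_of_le_one (hδ₀ : 0 < δ) (hδ : δ ≤ 1) (hF : F₁ ⊆ F₂) (hxy : G.Adj x y)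
    (he : s(x, y) ∈ F₁) : phat G δ F₁ x y ≤ phat G δ F₂ x y := by
  rw [phat_of_adj_of_mem hxy he, phat_of_adj_of_mem hxy (hF he)]
  exact div_le_div_of_nonneg_left hδ₀.le (sum_neighborFinset_gw_pos hδ₀ F₂ hxy)
    (Finset.sum_le_sum fun z _ => gw_anti_of_le_one hδ hF s(x, z))

theorem phat_anti_of_one_le (hδ : 1 ≤ δ) (hF : F₁ ⊆ F₂) (hxy : G.Adj x y) (he : s(x, y) ∈ F₁) :
    phat G δ F₂ x y ≤ phat G δ F₁ x y := by
  have hδ₀ : 0 < δ := one_pos.trans_le hδ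
  rw [phat_of_adj_of_mem hxy he, phat_of_adj_of_mem hxy (hF he)]
  exact div_le_div_of_nonneg_left hδ₀.le (sum_neighborFinset_gw_pos hδ₀ F₁ hxy)
    (Finset.sum_le_sum fun z _ => gw_mono_of_one_le hδ hF s(x, z))

theorem phat_edgeFinset (hδ : δ ≠ 0) (hxy : G.Adj x y) :
    phat G δ G.edgeFinset x y = (G.degree x : ℝ)⁻¹ := by
  have hsum : ∑ z ∈ G.neighborFinset x, gw δ G.edgeFinset s(x, z) = G.degree x * δ := by
    rw [← G.card_neighborFinset_eq_degree, ← nsmul_eq_mul]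
    refine Finset.sum_eq_card_nsmul fun z hz => ?_
    rw [gw, if_pos (by simpa using hz)]
  rw [phat_of_adj_of_mem hxy (by simpa using hxy), hsum, div_mul_cancel_right₀ hδ]

theorem phat_singleton (δ : ℝ) (hxy : G.Adj x y) :
    phat G δ {s(x, y)} x y = δ / (δ + (G.degree x - 1)) := by
  have hy : y ∈ G.neighborFinset x := by simpa using hxy
  have hsum : ∑ z ∈ (G.neighborFinset x).erase y, gw δ {s(x, y)} s(x, z) =
      ((G.neighborFinset x).erase y).card • (1 : ℝ) := by
    refine Finset.sum_eq_card_nsmul fun z hz => if_neg ?_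
    rw [Finset.mem_singleton, Sym2.congr_right]
    exact Finset.ne_of_mem_erase hz
  rw [phat_of_adj_of_mem hxy (Finset.mem_singleton_self _), ← Finset.add_sum_erase _ _ hy, hsum,
    nsmul_one, Finset.cast_card_erase_of_mem hy, G.card_neighborFinset_eq_degree, gw,
    if_pos (Finset.mem_singleton_self _)]

end Kernel

section EdgeCost

/-- The cost per step, relative to `p̂_F`, of jumping back and forth along the edge `{v, u}`. -/
def edgeCost (G : SimpleGraph V) [DecidableRel G.Adj] (δ : ℝ) (F : Finset (Sym2 V)) (v u : V) : ℝ :=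
  -(Real.log (phat G δ F v u) + Real.log (phat G δ F u v)) / 2

theorem edgeCost_anti_of_le_one (hδ₀ : 0 < δ) (hδ : δ ≤ 1) (hF : F₁ ⊆ F₂) (hvu : G.Adj v u)
    (he : s(v, u) ∈ F₁) : edgeCost G δ F₂ v u ≤ edgeCost G δ F₁ v u := by
  have hlog_vu := Real.log_le_log (phat_pos hδ₀ F₁ hvu) (phat_mono_of_le_one hδ₀ hδ hF hvu he)
  have hlog_uv := Real.log_le_log (phat_pos hδ₀ F₁ hvu.symm)
    (phat_mono_of_le_one hδ₀ hδ hF hvu.symm (Sym2.eq_swap ▸ he))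
  rw [edgeCost, edgeCost]
  linarith

theorem edgeCost_mono_of_one_le (hδ : 1 ≤ δ) (hF : F₁ ⊆ F₂) (hvu : G.Adj v u)
    (he : s(v, u) ∈ F₁) : edgeCost G δ F₁ v u ≤ edgeCost G δ F₂ v u := by
  have hδ₀ : 0 < δ := one_pos.trans_le hδ
  have hlog_vu := Real.log_le_log (phat_pos hδ₀ F₂ hvu) (phat_anti_of_one_le hδ hF hvu he)
  have hlog_uv := Real.log_le_log (phat_pos hδ₀ F₂ hvu.symm)
    (phat_anti_of_one_le hδ hF hvu.symm (Sym2.eq_swap ▸ he))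
  rw [edgeCost, edgeCost]
  linarith

theorem edgeCost_edgeFinset (hδ : δ ≠ 0) (hvu : G.Adj v u) :
    edgeCost G δ G.edgeFinset v u = (Real.log (G.degree v) + Real.log (G.degree u)) / 2 := by
  rw [edgeCost, phat_edgeFinset hδ hvu, phat_edgeFinset hδ hvu.symm, Real.log_inv, Real.log_inv]
  ring

theorem edgeCost_singleton (δ : ℝ) (hvu : G.Adj v u) :
    edgeCost G δ {s(v, u)} v u =
      -(Real.log (δ / (δ + (G.degree v - 1))) + Real.log (δ / (δ + (G.degree u - 1)))) / 2 := by
  have hswap : phat G δ {s(v, u)} u v = δ / (δ + (G.degree u - 1)) := by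
    rw [Sym2.eq_swap, phat_singleton δ hvu.symm]
  rw [edgeCost, phat_singleton δ hvu, hswap]

theorem relEntInt_edgeMeas_phat (hδ : 0 < δ) (F : Finset (Sym2 V)) (hvu : G.Adj v u)
    {q : V → V → ℝ} (hv : q v = Pi.single u 1) (hu : q u = Pi.single v 1) :
    relEntInt (edgeMeas v u).1 q (phat G δ F) = (edgeCost G δ F v u : EReal) := by
  rw [relEntInt_edgeMeas hvu.ne, hv, hu, relEnt_single (phat_pos hδ F hvu).ne',
    relEnt_single (phat_pos hδ F hvu.symm).ne', ← EReal.coe_mul, ← EReal.coe_mul,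
    ← EReal.coe_add, edgeCost]
  congr 1
  ring

end EdgeCost

section DeterministicKernel

theorem eq_single_of_TE_apply_eq_one {q : V → V → ℝ} (hq : q ∈ TE F) (hxy : q x y = 1) :
    q x = Pi.single y 1 := by
  have hsum := sum_eq_one_of_TE_apply_ne_zero hq (hxy.trans_ne one_ne_zero)
  rw [← Finset.add_sum_erase _ _ (Finset.mem_univ y), hxy, add_eq_left,
    Finset.sum_eq_zero_iff_of_nonneg fun z _ => hq.1 x z] at hsum
  funext z
  rcases eq_or_ne z y with rfl | hzy
  · rw [hxy, Pi.single_eq_same]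
  · rw [Pi.single_eq_of_ne hzy, hsum z (Finset.mem_erase.2 ⟨hzy, Finset.mem_univ z⟩)]

theorem deterministic_mem_TE {next : V → V} (hnext : ∀ x, memVerts F x → s(x, next x) ∈ F) :
    (fun x => if memVerts F x then Pi.single (next x) 1 else 0 : V → V → ℝ) ∈ TE F := by
  refine ⟨fun x y => ?_, fun x hx => by simp [hx], fun x y hxy => ?_⟩
  · dsimp only
    split_ifs
    · rw [Pi.single_apply]
      positivity
    · exact le_rfl
  · by_cases hx : memVerts F x
    · obtain rfl : y = next x := by
        by_contra hy
        simp [hx, hy] at hxy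
      exact hnext x hx
    · simp [hx] at hxy

theorem exists_mem_TE_swapping (hvu : v ≠ u) (he : s(v, u) ∈ F) :
    ∃ q ∈ TE F, q v = Pi.single u 1 ∧ q u = Pi.single v 1 := by
  have hexists (x : V) : ∃ y, (x = v → y = u) ∧ (x = u → y = v) ∧
      (memVerts F x → s(x, y) ∈ F) := by
    rcases eq_or_ne x v with rfl | hxv
    · exact ⟨u, fun _ => rfl, fun h => absurd h hvu, fun _ => he⟩
    rcases eq_or_ne x u with rfl | hxu
    · exact ⟨v, fun h => absurd h hxv, fun _ => rfl, fun _ => Sym2.eq_swap ▸ he⟩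
    by_cases hx : memVerts F x
    · obtain ⟨e, heF, hxe⟩ := hx
      obtain ⟨y, rfl⟩ := Sym2.mem_iff_exists.1 hxe
      exact ⟨y, fun h => absurd h hxv, fun h => absurd h hxu, fun _ => heF⟩
    · exact ⟨x, fun h => absurd h hxv, fun h => absurd h hxu, fun h => absurd h hx⟩
  choose next hnext_v hnext_u hnext using hexists
  have hv : memVerts F v := ⟨_, he, Sym2.mem_mk_left v u⟩
  have hu : memVerts F u := ⟨_, he, Sym2.mem_mk_right v u⟩
  exact ⟨_, deterministic_mem_TE hnext, by simp [hv, hnext_v v rfl], by simp [hu, hnext_u u rfl]⟩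

end DeterministicKernel

section AdmissibleSequence

/-- `F'` arises from `F` by traversing one new edge of `G` adjacent to `F`: a single step of
a sequence in `ℰ`. -/
def IsEdgeExtension (G : SimpleGraph V) [DecidableRel G.Adj] (F F' : Finset (Sym2 V)) : Prop :=
  ∃ e ∈ G.edgeFinset \ F, (∃ e' ∈ F, edgeAdj e e') ∧ F' = insert e F

namespace IsEdgeExtension

variable {F' : Finset (Sym2 V)}

theorem ssubset (h : IsEdgeExtension G F F') : F ⊂ F' := by
  obtain ⟨e, he, -, rfl⟩ := h
  exact Finset.ssubset_insert (Finset.mem_sdiff.1 he).2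

theorem subset_edgeFinset (h : IsEdgeExtension G F F') (hF : F ⊆ G.edgeFinset) :
    F' ⊆ G.edgeFinset := by
  obtain ⟨e, he, -, rfl⟩ := h
  exact Finset.insert_subset (Finset.mem_sdiff.1 he).1 hF

theorem card_eq (h : IsEdgeExtension G F F') : F'.card = F.card + 1 := by
  obtain ⟨e, he, -, rfl⟩ := h
  exact Finset.card_insert_of_notMem (Finset.mem_sdiff.1 he).2

theorem exists_edgeAdj (h : IsEdgeExtension G F F') {e : Sym2 V} (he : e ∈ F' \ F) :
    ∃ e' ∈ F, edgeAdj e e' := by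
  obtain ⟨e₀, -, hadj, rfl⟩ := h
  obtain ⟨heF', heF⟩ := Finset.mem_sdiff.1 he
  rwa [(Finset.mem_insert.1 heF').resolve_right heF]

end IsEdgeExtension

theorem exists_isEdgeExtension (hG : G.Connected) (hF : F ⊂ G.edgeFinset) (hne : F.Nonempty) :
    ∃ F', IsEdgeExtension G F F' := by
  suffices hnew : ∃ x y, G.Adj x y ∧ s(x, y) ∉ F ∧ memVerts F x by
    obtain ⟨x, y, hxy, hnot, e', he', hx⟩ := hnew
    exact ⟨_, s(x, y), by simp [hxy, hnot], ⟨e', he', x, Sym2.mem_mk_left x y, hx⟩, rfl⟩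
  obtain ⟨e, heG, heF⟩ := Finset.exists_of_ssubset hF
  obtain ⟨e₀, he₀⟩ := hne
  induction e with | _ a b =>
  induction e₀ with | _ x₀ y₀ =>
  by_cases ha : memVerts F a
  · exact ⟨a, b, by simpa using heG, heF, ha⟩
  obtain ⟨walk⟩ := hG.preconnected x₀ a
  obtain ⟨d, -, hfst, hsnd⟩ :=
    walk.exists_boundary_dart {x | memVerts F x} ⟨_, he₀, Sym2.mem_mk_left x₀ y₀⟩ ha
  exact ⟨d.fst, d.snd, d.adj, fun hd => hsnd ⟨_, hd, Sym2.mem_mk_right _ _⟩, hfst⟩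

theorem exists_seq_isEdgeExtension (hG : G.Connected) (e : Sym2 V) :
    ∃ f : ℕ → Finset (Sym2 V), f 0 = {e} ∧
      ∀ n, f n ⊂ G.edgeFinset → IsEdgeExtension G (f n) (f (n + 1)) := by
  have hexists (F : {F : Finset (Sym2 V) // F.Nonempty}) :
      ∃ F' : {F : Finset (Sym2 V) // F.Nonempty},
        F.1 ⊂ G.edgeFinset → IsEdgeExtension G F.1 F'.1 := by
    by_cases hF : F.1 ⊂ G.edgeFinset
    · obtain ⟨F', hF'⟩ := exists_isEdgeExtension hG hF F.2
      exact ⟨⟨F', F.2.mono hF'.ssubset.subset⟩, fun _ => hF'⟩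
    · exact ⟨F, fun h => absurd h hF⟩
  choose step hstep using hexists
  refine ⟨fun n => (step^[n] ⟨{e}, Finset.singleton_nonempty e⟩).1, rfl, fun n hn => ?_⟩
  simp only [Function.iterate_succ_apply']
  exact hstep _ hn

theorem mem_seqE_of_isEdgeExtension {e : Sym2 V} (he : e ∈ G.edgeFinset) (hv₁ : v₁ ∈ e)
    {f : ℕ → Finset (Sym2 V)} (hzero : f 0 = {e})
    (hstep : ∀ n, f n ⊂ G.edgeFinset → IsEdgeExtension G (f n) (f (n + 1))) :
    (fun k : Fin G.edgeFinset.card => f k) ∈ seqE G v₁ := by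
  have ssubset_of_card {n : ℕ} (hn : n + 1 < G.edgeFinset.card)
      (hf : f n ⊆ G.edgeFinset ∧ (f n).card = n + 1) : f n ⊂ G.edgeFinset :=
    hf.1.ssubset_of_ne fun h => by grind
  have hf (n : ℕ) (hn : n < G.edgeFinset.card) : f n ⊆ G.edgeFinset ∧ (f n).card = n + 1 := by
    induction n with
    | zero => simpa [hzero] using he
    | succ n ih =>
      have hprev := ih (by omega)
      have hext := hstep n (ssubset_of_card hn hprev)
      exact ⟨hext.subset_edgeFinset hprev.1, by rw [hext.card_eq, hprev.2]⟩
  have hext {k l : Fin G.edgeFinset.card} (hkl : (k : ℕ) + 1 = l) :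
      IsEdgeExtension G (f k) (f l) :=
    hkl ▸ hstep k (ssubset_of_card (hkl ▸ l.2) (hf k k.2))
  refine ⟨fun k => (hf k k.2).1, fun k => (hf k k.2).2, fun k l hkl => (hext hkl).ssubset,
    fun k hk => ⟨e, ?_, hv₁⟩, fun k l hkl e' he' => (hext hkl).exists_edgeAdj he'⟩
  simp [hk, hzero]

theorem exists_mem_seqE (hG : G.Connected) {e : Sym2 V} (he : e ∈ G.edgeFinset) (hv₁ : v₁ ∈ e) :
    ∃ Es ∈ seqE G v₁, ∀ k : Fin G.edgeFinset.card, (k : ℕ) = 0 → Es k = {e} := by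
  obtain ⟨f, hzero, hstep⟩ := exists_seq_isEdgeExtension hG e
  exact ⟨_, mem_seqE_of_isEdgeExtension he hv₁ hzero hstep, fun k hk => by simp [hk, hzero]⟩

variable {Es : Fin G.edgeFinset.card → Finset (Sym2 V)}

theorem mem_of_mem_seqE (hEs : Es ∈ seqE G v₁) {e : Sym2 V}
    (hzero : ∀ k : Fin G.edgeFinset.card, (k : ℕ) = 0 → e ∈ Es k) (k : Fin G.edgeFinset.card) :
    e ∈ Es k := by
  obtain ⟨n, hn⟩ := k
  induction n with
  | zero => exact hzero _ rfl
  | succ n ih => exact (hEs.2.2.1 ⟨n, by omega⟩ ⟨n + 1, hn⟩ rfl).subset (ih _)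

theorem seqE_last_eq_edgeFinset (hEs : Es ∈ seqE G v₁) {k : Fin G.edgeFinset.card}
    (hk : (k : ℕ) + 1 = G.edgeFinset.card) : Es k = G.edgeFinset :=
  Finset.eq_of_subset_of_card_le (hEs.1 k) (by rw [hEs.2.1 k, hk])

end AdmissibleSequence

section RateFunction

theorem Ifun_edgeMeas_le (hδ : 0 < δ) (hvu : G.Adj v u)
    {Es : Fin G.edgeFinset.card → Finset (Sym2 V)} (hEs : Es ∈ seqE G v₁)
    (he : ∀ k, s(v, u) ∈ Es k) (k : Fin G.edgeFinset.card) :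
    Ifun G v₁ δ (edgeMeas v u) ≤ (edgeCost G δ (Es k) v u : EReal) := by
  choose qs hqs hv hu using fun l => exists_mem_TE_swapping hvu.ne (he l)
  refine sInf_le ⟨fun _ => edgeMeas v u, Pi.single k 1, Es, qs, hEs,
    fun l => ?_, by simp, fun l x hx => ?_, fun x => ?_, hqs,
    fun l => invariant_edgeMeas (hv l) (hu l), ?_⟩
  · rw [Pi.single_apply]
    positivity
  · exact ⟨_, he l, Sym2.mem_iff.2 (eq_or_eq_of_edgeMeas_ne_zero hx)⟩
  · rw [← Finset.sum_mul, Finset.sum_pi_single', if_pos (Finset.mem_univ k), one_mul]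
  · rw [Finset.sum_eq_single k]
    · rw [relEntInt_edgeMeas_phat hδ (Es k) hvu (hv k) (hu k), Pi.single_eq_same, EReal.coe_one,
        one_mul]
    · intro l _ hl
      rw [Pi.single_eq_of_ne hl, EReal.coe_zero, zero_mul]
    · simp

theorem le_relEntInt_of_invariant (hδ : 0 < δ) (hvu : G.Adj v u) {m : ℝ}
    (hm : s(v, u) ∈ F → m ≤ edgeCost G δ F v u) (hF : F ⊆ G.edgeFinset) {ν : ProbMeas V}
    (hν : ∀ x, x ≠ v → x ≠ u → ν.1 x = 0) {q : V → V → ℝ} (hq : q ∈ TE F)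
    (hinv : Invariant ν.1 q) : (m : EReal) ≤ relEntInt ν.1 q (phat G δ F) := by
  obtain ⟨rfl, hqvu, hquv⟩ :=
    eq_edgeMeas_of_invariant hvu.ne hν hinv (TE_apply_self hF hq) (TE_apply_le_one hq)
  rw [relEntInt_edgeMeas_phat hδ F hvu (eq_single_of_TE_apply_eq_one hq hqvu)
    (eq_single_of_TE_apply_eq_one hq hquv)]
  exact_mod_cast hm (hq.2.2 v u (hqvu.trans_ne one_ne_zero))

theorem le_Ifun_edgeMeas (hδ : 0 < δ) (hvu : G.Adj v u) {m : ℝ}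
    (hm : ∀ F ⊆ G.edgeFinset, s(v, u) ∈ F → m ≤ edgeCost G δ F v u) :
    (m : EReal) ≤ Ifun G v₁ δ (edgeMeas v u) := by
  refine le_sInf ?_
  rintro c ⟨νs, r, Es, qs, hEs, hr, hr_sum, -, hmix, hqs, hinv, rfl⟩
  have hm_eq : (m : EReal) = ∑ k, (r k : EReal) * (m : EReal) := by
    simp only [← EReal.coe_mul]
    rw [← coe_real_sum, ← Finset.sum_mul, hr_sum, one_mul]
  rw [hm_eq]
  refine Finset.sum_le_sum fun k _ => ?_
  rcases (hr k).eq_or_lt with hrk | hrk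
  · simp [← hrk]
  · have hνk (x : V) (hxv : x ≠ v) (hxu : x ≠ u) : (νs k).1 x = 0 :=
      eq_zero_of_mixture_eq_zero hr ((hmix x).trans (edgeMeas_apply_of_ne hxv hxu)) hrk
    exact mul_le_mul_of_nonneg_left
      (le_relEntInt_of_invariant hδ hvu (hm _ (hEs.1 k)) (hEs.1 k) hνk (hqs k) (hinv k))
      (EReal.coe_nonneg.2 (hr k))

theorem Ifun_edgeMeas_of_le_one (hG : G.Connected) (hvu : G.Adj v₁ u) (hδ₀ : 0 < δ) (hδ : δ ≤ 1) :
    Ifun G v₁ δ (edgeMeas v₁ u) =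
      ((Real.log (G.degree v₁) + Real.log (G.degree u)) / 2 : ℝ) := by
  have he : s(v₁, u) ∈ G.edgeFinset := by simpa using hvu
  have hcard : 0 < G.edgeFinset.card := Finset.card_pos.2 ⟨_, he⟩
  obtain ⟨Es, hEs, hzero⟩ := exists_mem_seqE hG he (Sym2.mem_mk_left v₁ u)
  have hmem := mem_of_mem_seqE hEs fun k hk => hzero k hk ▸ Finset.mem_singleton_self s(v₁, u)
  have hlast : Es ⟨G.edgeFinset.card - 1, by omega⟩ = G.edgeFinset :=
    seqE_last_eq_edgeFinset hEs (Nat.sub_add_cancel hcard)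
  rw [← edgeCost_edgeFinset hδ₀.ne' hvu]
  refine le_antisymm ?_ (le_Ifun_edgeMeas hδ₀ hvu fun F hF heF =>
    edgeCost_anti_of_le_one hδ₀ hδ hF hvu heF)
  simpa only [hlast] using Ifun_edgeMeas_le hδ₀ hvu hEs hmem ⟨G.edgeFinset.card - 1, by omega⟩

theorem Ifun_edgeMeas_of_one_le (hG : G.Connected) (hvu : G.Adj v₁ u) (hδ : 1 ≤ δ) :
    Ifun G v₁ δ (edgeMeas v₁ u) =
      (-(Real.log (δ / (δ + (G.degree v₁ - 1))) +
        Real.log (δ / (δ + (G.degree u - 1)))) / 2 : ℝ) := by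
  have hδ₀ : 0 < δ := one_pos.trans_le hδ
  have he : s(v₁, u) ∈ G.edgeFinset := by simpa using hvu
  have hcard : 0 < G.edgeFinset.card := Finset.card_pos.2 ⟨_, he⟩
  obtain ⟨Es, hEs, hzero⟩ := exists_mem_seqE hG he (Sym2.mem_mk_left v₁ u)
  have hmem := mem_of_mem_seqE hEs fun k hk => hzero k hk ▸ Finset.mem_singleton_self s(v₁, u)
  rw [← edgeCost_singleton δ hvu]
  refine le_antisymm ?_ (le_Ifun_edgeMeas hδ₀ hvu fun F _ heF =>
    edgeCost_mono_of_one_le hδ (Finset.singleton_subset_iff.2 heF) hvu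
      (Finset.mem_singleton_self _))
  simpa only [hzero ⟨0, hcard⟩ rfl] using Ifun_edgeMeas_le hδ₀ hvu hEs hmem ⟨0, hcard⟩

theorem hasDerivWithinAt_Iic_Ifun_edgeMeas (hG : G.Connected) (hvu : G.Adj v₁ u) :
    HasDerivWithinAt (fun d : ℝ => (Ifun G v₁ d (edgeMeas v₁ u)).toReal) 0 (Set.Iic 1) 1 := by
  refine (hasDerivWithinAt_const (1 : ℝ) (Set.Iic 1)
    ((Real.log (G.degree v₁) + Real.log (G.degree u)) / 2)).congr_of_eventuallyEq_of_mem ?_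
    Set.self_mem_Iic
  filter_upwards [self_mem_nhdsWithin, mem_nhdsWithin_of_mem_nhds (lt_mem_nhds one_pos)]
    with d hd_le hd_pos
  rw [Ifun_edgeMeas_of_le_one hG hvu hd_pos hd_le, EReal.toReal_coe]

theorem hasDerivWithinAt_Ici_Ifun_edgeMeas (hG : G.Connected) (hvu : G.Adj v₁ u) :
    HasDerivWithinAt (fun d : ℝ => (Ifun G v₁ d (edgeMeas v₁ u)).toReal)
      (-((1 - (G.degree v₁ : ℝ)⁻¹) + (1 - (G.degree u : ℝ)⁻¹)) / 2) (Set.Ici 1) 1 := by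
  have hdeg_v : (0 : ℝ) < G.degree v₁ := by exact_mod_cast hvu.degree_pos_left
  have hdeg_u : (0 : ℝ) < G.degree u := by exact_mod_cast hvu.degree_pos_right
  have hcost := ((hasDerivAt_log_div_add_sub_one hdeg_v).fun_add
    (hasDerivAt_log_div_add_sub_one hdeg_u)).fun_neg.div_const 2
  refine hcost.hasDerivWithinAt.congr_of_mem (fun d hd => ?_) Set.self_mem_Ici
  rw [Ifun_edgeMeas_of_one_le hG hvu hd, EReal.toReal_coe]

end RateFunction

end Graph

/-- For some `μ`, the map `δ ↦ I_δ(μ)` is not differentiable at `δ = 1`. -/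
theorem orrw_rate_not_differentiable {V : Type} [Fintype V] [DecidableEq V]
    (G : SimpleGraph V) [DecidableRel G.Adj] (hG : G.Connected)
    (hV : 3 ≤ Fintype.card V) (v₁ : V) :
    ∃ μ : ProbMeas V, ¬ DifferentiableAt ℝ (fun d : ℝ => (Ifun G v₁ d μ).toReal) 1 := by
  have : Nontrivial V := Fintype.one_lt_card_iff_nontrivial.1 (by omega)
  obtain ⟨u, hvu⟩ := hG.preconnected.exists_adj_of_nontrivial v₁
  refine ⟨edgeMeas v₁ u, not_differentiableAt_of_hasDerivWithinAt_Iic_Ici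
    (hasDerivWithinAt_Iic_Ifun_edgeMeas hG hvu) (hasDerivWithinAt_Ici_Ifun_edgeMeas hG hvu)
    (ne_of_gt ?_)⟩
  have hinv_v : (G.degree v₁ : ℝ)⁻¹ ≤ 1 := Nat.cast_inv_le_one _
  have hinv_u : (G.degree u : ℝ)⁻¹ ≤ 1 := Nat.cast_inv_le_one _
  rcases one_lt_degree_or_one_lt_degree hG hV hvu with hdeg | hdeg
  · have : (G.degree v₁ : ℝ)⁻¹ < 1 := inv_lt_one_of_one_lt₀ (by exact_mod_cast hdeg)
    linarith
  · have : (G.degree u : ℝ)⁻¹ < 1 := inv_lt_one_of_one_lt₀ (by exact_mod_cast hdeg)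
    linarith

end ORRW
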